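/- arXiv:math/0409553 — 3 statements merged into one kernel-verified Lean document; each statement's English description precedes it below -/
import Mathlib

section
/- Let E be a finite-dimensional real inner product space, U ⊆ E a nonempty open set, p ≥ 1 an integer, and φ : U → ℂⁿ a differentiable map. Then φ is pseudo-horizontally weakly conformal if and only if for every open set V ⊆ ℂⁿ and every holomorphic map ψ : V → ℂᵖ, the composition ψ∘φ : φ⁻¹(V) → ℂᵖ is pseudo-horizontally weakly conformal. -/
/-!
The two PHWC equations for a pair of components `f, g` are the real and imaginary parts of the
single complex equation `∑ i, df(eᵢ) * dg(eᵢ) = 0`, where `(eᵢ)` is an orthonormal basis of `E`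
(`pairCond_iff`). The left-hand side is the complex-*bilinear* extension of the inner product
applied to `df` and `dg`.

If `ψ` is holomorphic, `d(ψ ∘ φ)` is a complex-linear combination of the `dφ^A`
(`fderiv_comp_holom_apply`), so bilinearity carries the vanishing for `φ` over to `ψ ∘ φ`.
Conversely, the vanishing for all the maps `ψ(z) = (z_A + z_B, …, z_A + z_B)` gives the vanishing
for every pair `φ^A, φ^B` by polarization; all components of `ψ` being equal, only the diagonal
pair at one index of `Fin p` is needed, and such an index exists because `1 ≤ p`.
-/

open scoped RealInnerProductSpace

/-- The Laplacian of a real-valued function on an inner product space: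
the trace of the derivative of the gradient (i.e. of the second derivative). -/
noncomputable def lap {E : Type*} [NormedAddCommGroup E] [InnerProductSpace ℝ E]
    [CompleteSpace E] (f : E → ℝ) (x : E) : ℝ :=
  LinearMap.trace ℝ E (fderiv ℝ (gradient f) x : E →ₗ[ℝ] E)

/-- A real-valued function is harmonic on an open set `W` if it is `C²` there and its
Laplacian vanishes identically on `W`. -/
def HarmonicOn {E : Type*} [NormedAddCommGroup E] [InnerProductSpace ℝ E]
    [CompleteSpace E] (f : E → ℝ) (W : Set E) : Prop :=
  ContDiffOn ℝ 2 f W ∧ ∀ x ∈ W, lap f x = 0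

/-- Pseudo-horizontally weakly conformal map into `ℂⁿ`, on a set `U`. -/
def PHWCOn {E : Type*} [NormedAddCommGroup E] [InnerProductSpace ℝ E] [CompleteSpace E]
    {n : ℕ} (φ : E → (Fin n → ℂ)) (U : Set E) : Prop :=
  ∀ A B : Fin n, ∀ x ∈ U,
    ⟪gradient (fun y => (φ y A).re) x, gradient (fun y => (φ y B).re) x⟫ -
      ⟪gradient (fun y => (φ y A).im) x, gradient (fun y => (φ y B).im) x⟫ = 0 ∧
    ⟪gradient (fun y => (φ y A).im) x, gradient (fun y => (φ y B).re) x⟫ +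
      ⟪gradient (fun y => (φ y A).re) x, gradient (fun y => (φ y B).im) x⟫ = 0

/-- Pseudo harmonic morphism into `ℂⁿ` on a set `U`: a `C²` map which is harmonic
(the real and imaginary parts of each component are harmonic) and
pseudo-horizontally weakly conformal. -/
def PHMOn {E : Type*} [NormedAddCommGroup E] [InnerProductSpace ℝ E] [CompleteSpace E]
    {n : ℕ} (φ : E → (Fin n → ℂ)) (U : Set E) : Prop :=
  ContDiffOn ℝ 2 φ U ∧
  (∀ k : Fin n, HarmonicOn (fun y => (φ y k).re) U ∧ HarmonicOn (fun y => (φ y k).im) U) ∧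
  PHWCOn φ U

section PHWC

variable {E : Type*} [NormedAddCommGroup E] [InnerProductSpace ℝ E]

lemma fderiv_re_apply {f : E → ℂ} {x : E} (hf : DifferentiableAt ℝ f x) (v : E) :
    fderiv ℝ (fun y => (f y).re) x v = (fderiv ℝ f x v).re := by
  have h := (Complex.reCLM.hasFDerivAt.comp x hf.hasFDerivAt).fderiv
  exact DFunLike.congr_fun h v

lemma fderiv_im_apply {f : E → ℂ} {x : E} (hf : DifferentiableAt ℝ f x) (v : E) :
    fderiv ℝ (fun y => (f y).im) x v = (fderiv ℝ f x v).im := by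
  have h := (Complex.imCLM.hasFDerivAt.comp x hf.hasFDerivAt).fderiv
  exact DFunLike.congr_fun h v

lemma fderiv_coord_apply {n : ℕ} {φ : E → Fin n → ℂ} {x : E} (hφ : DifferentiableAt ℝ φ x)
    (A : Fin n) (v : E) : fderiv ℝ (fun y => φ y A) x v = fderiv ℝ φ x v A :=
  DFunLike.congr_fun (hasFDerivAt_pi'.1 hφ.hasFDerivAt A).fderiv v

/-- The chain rule in coordinates. Holomorphy of `ψ` ensures that no `dφ̄^A` terms appear. -/
lemma fderiv_comp_holom_apply {n p : ℕ} {φ : E → Fin n → ℂ} {ψ : (Fin n → ℂ) → Fin p → ℂ}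
    {x : E} (hφ : DifferentiableAt ℝ φ x) (hψ : DifferentiableAt ℂ ψ (φ x)) (a : Fin p) (v : E) :
    fderiv ℝ (fun y => ψ (φ y) a) x v =
      ∑ A, fderiv ℂ ψ (φ x) (Pi.single A 1) a * fderiv ℝ (fun y => φ y A) x v := by
  have h := (hψ.hasFDerivAt.restrictScalars ℝ).comp x hφ.hasFDerivAt
  have h' : fderiv ℝ (fun y => ψ (φ y) a) x v = fderiv ℂ ψ (φ x) (fderiv ℝ φ x v) a :=
    DFunLike.congr_fun (hasFDerivAt_pi'.1 h a).fderiv v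
  rw [h']
  conv_lhs => rw [pi_eq_sum_univ' (fderiv ℝ φ x v)]
  simp only [map_sum, map_smul, Finset.sum_apply, Pi.smul_apply, smul_eq_mul,
    fderiv_coord_apply hφ]
  refine Finset.sum_congr rfl fun A _ => ?_
  rw [mul_comm]

variable [FiniteDimensional ℝ E]

/-- The complex-bilinear extension of the inner product on `E`, evaluated on the differentials of
`f` and `g` at `x` in an orthonormal basis. There is no complex conjugation. -/
noncomputable def gradPair (f g : E → ℂ) (x : E) : ℂ :=
  ∑ i, fderiv ℝ f x (stdOrthonormalBasis ℝ E i) * fderiv ℝ g x (stdOrthonormalBasis ℝ E i)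

lemma gradient_inner_eq (u v : E → ℝ) (x : E) :
    ⟪gradient u x, gradient v x⟫ =
      ∑ i, fderiv ℝ u x (stdOrthonormalBasis ℝ E i) *
        fderiv ℝ v x (stdOrthonormalBasis ℝ E i) := by
  rw [← OrthonormalBasis.sum_inner_mul_inner (stdOrthonormalBasis ℝ E)]
  refine Finset.sum_congr rfl fun i _ => ?_
  rw [real_inner_comm (gradient v x)]
  simp [gradient, InnerProductSpace.toDual_symm_apply]

lemma pairCond_iff {f g : E → ℂ} {x : E} (hf : DifferentiableAt ℝ f x)
    (hg : DifferentiableAt ℝ g x) :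
    (⟪gradient (fun y => (f y).re) x, gradient (fun y => (g y).re) x⟫ -
      ⟪gradient (fun y => (f y).im) x, gradient (fun y => (g y).im) x⟫ = 0 ∧
    ⟪gradient (fun y => (f y).im) x, gradient (fun y => (g y).re) x⟫ +
      ⟪gradient (fun y => (f y).re) x, gradient (fun y => (g y).im) x⟫ = 0) ↔
    gradPair f g x = 0 := by
  simp only [gradient_inner_eq, fderiv_re_apply hf, fderiv_re_apply hg, fderiv_im_apply hf,
    fderiv_im_apply hg, ← Finset.sum_sub_distrib, ← Finset.sum_add_distrib, gradPair,
    Complex.ext_iff, Complex.re_sum, Complex.im_sum, Complex.mul_re, Complex.mul_im,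
    Complex.zero_re, Complex.zero_im]
  simp only [add_comm]

end PHWC

/-- A differentiable map `φ : U → ℂⁿ` is pseudo-horizontally weakly conformal if and only if,
for every open set `V ⊆ ℂⁿ` and every holomorphic map `ψ : V → ℂᵖ`, the composition
`ψ ∘ φ` is pseudo-horizontally weakly conformal on `φ⁻¹(V)`. -/
theorem phwc_iff_comp_holom_map_phwc {E : Type*} [NormedAddCommGroup E]
    [InnerProductSpace ℝ E] [FiniteDimensional ℝ E] {n : ℕ}
    (U : Set E) (hU : IsOpen U) (hUne : U.Nonempty)
    (p : ℕ) (hp : 1 ≤ p)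
    (φ : E → (Fin n → ℂ)) (hφ : DifferentiableOn ℝ φ U) :
    PHWCOn φ U ↔
    ∀ V : Set (Fin n → ℂ), IsOpen V → ∀ ψ : (Fin n → ℂ) → (Fin p → ℂ),
      DifferentiableOn ℂ ψ V → PHWCOn (fun y => ψ (φ y)) (U ∩ φ ⁻¹' V) := by
  have hd : ∀ x ∈ U, DifferentiableAt ℝ φ x := fun x hx => hφ.differentiableAt (hU.mem_nhds hx)
  have hdc : ∀ x ∈ U, ∀ A, DifferentiableAt ℝ (fun y => φ y A) x := fun x hx A =>
    differentiableAt_pi.1 (hd x hx) A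
  constructor
  · intro h V hV ψ hψ a b x hx
    have hψx : DifferentiableAt ℂ ψ (φ x) := hψ.differentiableAt (hV.mem_nhds hx.2)
    have hcomp : DifferentiableAt ℝ (fun y => ψ (φ y)) x :=
      (hψx.restrictScalars ℝ).comp x (hd x hx.1)
    rw [pairCond_iff (f := fun y => ψ (φ y) a) (g := fun y => ψ (φ y) b)
      (differentiableAt_pi.1 hcomp a) (differentiableAt_pi.1 hcomp b)]
    simp only [gradPair, fderiv_comp_holom_apply (hd x hx.1) hψx, Finset.sum_mul_sum]
    rw [Finset.sum_comm]
    refine Finset.sum_eq_zero fun A _ => ?_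
    rw [Finset.sum_comm]
    refine Finset.sum_eq_zero fun B _ => ?_
    have hAB := (pairCond_iff (hdc x hx.1 A) (hdc x hx.1 B)).1 (h A B x hx.1)
    rw [gradPair] at hAB
    simp only [mul_mul_mul_comm _ (fderiv ℝ (fun y => φ y A) x _), ← Finset.mul_sum, hAB, mul_zero]
  · intro h A B x hx
    rw [pairCond_iff (f := fun y => φ y A) (g := fun y => φ y B) (hdc x hx A) (hdc x hx B)]
    have key : ∀ C D : Fin n, gradPair (fun y => φ y C) (fun y => φ y C) x +
        2 * gradPair (fun y => φ y C) (fun y => φ y D) x +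
        gradPair (fun y => φ y D) (fun y => φ y D) x = 0 := by
      intro C D
      have h1 := h Set.univ isOpen_univ (fun z _ => z C + z D) (by fun_prop) ⟨0, hp⟩ ⟨0, hp⟩ x
        ⟨hx, trivial⟩
      have hs := (hdc x hx C).fun_add (hdc x hx D)
      have h2 := (pairCond_iff hs hs).1 h1
      rw [← h2]
      simp only [gradPair, fderiv_fun_add (hdc x hx C) (hdc x hx D), add_apply,
        Finset.mul_sum, ← Finset.sum_add_distrib]
      exact Finset.sum_congr rfl fun i _ => by ring
    -- `key C C` says that four times the diagonal term vanishes.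
    linear_combination (1 / 2) * key A B - (1 / 8) * key A A - (1 / 8) * key B B
end

section
/- Let E be a finite-dimensional real inner product space, U ⊆ E a nonempty open set, p ≥ 1 an integer, and φ : U → ℂⁿ a C² map. Then φ is a pseudo harmonic morphism if and only if for every open set V ⊆ ℂⁿ and every holomorphic map ψ : V → ℂᵖ, the composition ψ∘φ : φ⁻¹(V) → ℂᵖ is a pseudo harmonic morphism. -/
/-!
In complex notation, `φ` is a pseudo harmonic morphism when each `Δφ^A` vanishes and
`∑ᵢ ∂ᵢφ^A ∂ᵢφ^B = 0` for all `A, B`, where `∂ᵢ` are the derivatives along an orthonormal basis of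
`E` (`phmOn_iff`). For `g` holomorphic the chain rule (`laplacian_comp_holomorphic`) reads
`Δ(g ∘ φ) = ∑ᵢ g''(∂ᵢφ, ∂ᵢφ) + g'(Δφ)`, with `g''` complex bilinear.

If `φ` is a pseudo harmonic morphism, every complex bilinear form has zero trace along the vectors
`∂ᵢφ` (`sum_bilin_eq_zero`). Applied to `g''` this gives harmonicity of `ψ ∘ φ`, and applied to
`(v, w) ↦ dψ^k(v) dψ^l(w)` it gives conformality. The chain rule needs `ψ` to be of class `C²`:
the derivative of a holomorphic map of several variables is again holomorphic, by differentiating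
Cauchy's formula along complex lines under the integral sign (`differentiableAt_fderiv_apply`).

Conversely, the test maps all of whose components equal `z_A` give `Δφ^A = 0`, and those with
components `z_A z_B` then give `0 = Δ(φ^A φ^B) = 2 ∑ᵢ ∂ᵢφ^A ∂ᵢφ^B`.
-/

open scoped RealInnerProductSpace

/-! ### Regularity of holomorphic maps of several variables -/

open Metric Set Filter Topology Complex MeasureTheory in
/-- Cauchy's formula on the complex line through `z` in direction `v`, differentiated under the
integral sign: directional derivatives of a holomorphic map of several variables are holomorphic. -/
lemma differentiableAt_fderiv_apply {F G : Type*} [NormedAddCommGroup F] [NormedSpace ℂ F]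
    [FiniteDimensional ℂ F] [NormedAddCommGroup G] [NormedSpace ℂ G] [FiniteDimensional ℂ G]
    {V : Set F} (hV : IsOpen V) {g : F → G} (hg : DifferentiableOn ℂ g V) {z₀ : F} (hz₀ : z₀ ∈ V)
    (v : F) : DifferentiableAt ℂ (fun z => fderiv ℂ g z v) z₀ := by
  have : ProperSpace F := FiniteDimensional.proper ℂ F
  have : ProperSpace (F →L[ℂ] G) := FiniteDimensional.proper ℂ _
  have : CompleteSpace G := FiniteDimensional.complete ℂ G
  let : MeasurableSpace F := borel F
  have : BorelSpace F := ⟨rfl⟩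
  let : MeasurableSpace (F →L[ℂ] G) := borel _
  have : BorelSpace (F →L[ℂ] G) := ⟨rfl⟩
  obtain ⟨ε, hε, hεV⟩ := Metric.isOpen_iff.1 hV z₀ hz₀
  obtain ⟨r, hr, hrε⟩ : ∃ r : ℝ, 0 < r ∧ 3 * r < ε := ⟨ε / 4, by positivity, by linarith⟩
  have hsub : closedBall z₀ (3 * r) ⊆ V := (closedBall_subset_ball hrε).trans hεV
  obtain ⟨C, hC⟩ := (isCompact_closedBall z₀ (3 * r)).exists_bound_of_continuousOn
    (hg.continuousOn.mono hsub)
  -- Cauchy's estimate, in the form of the Schwarz lemma on balls of radius `r`.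
  have hbound : ∀ w ∈ ball z₀ (2 * r), ‖fderiv ℂ g w‖ ≤ 2 * C / r := by
    intro w hw
    have hw3 : ball w r ⊆ closedBall z₀ (3 * r) := by
      intro y hy
      rw [mem_ball] at hw hy
      rw [mem_closedBall]
      linarith [dist_triangle y w z₀]
    refine Complex.norm_fderiv_le_div_of_mapsTo_ball (hg.mono (hw3.trans hsub)) ?_ hr
    intro y hy
    rw [mem_closedBall, dist_eq_norm]
    have h1 := hC y (hw3 hy)
    have h2 := hC w (hw3 (mem_ball_self hr))
    linarith [norm_sub_le (g y) (g w)]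
  have hv : 0 < ‖v‖ + 1 := by positivity
  obtain ⟨ρ, hρ, hρv⟩ : ∃ ρ : ℝ, 0 < ρ ∧ ρ * ‖v‖ < r := by
    refine ⟨r / (‖v‖ + 1), by positivity, ?_⟩
    rw [div_mul_eq_mul_div, div_lt_iff₀ hv]
    nlinarith
  have hmem : ∀ z ∈ ball z₀ r, ∀ ζ : ℂ, ‖ζ‖ ≤ ρ → z + ζ • v ∈ ball z₀ (2 * r) := by
    intro z hz ζ hζ
    rw [mem_ball, dist_eq_norm] at hz ⊢
    have : ‖ζ • v‖ ≤ ρ * ‖v‖ := by rw [norm_smul]; gcongr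
    calc ‖z + ζ • v - z₀‖ = ‖(z - z₀) + ζ • v‖ := by congr 1; abel
      _ ≤ ‖z - z₀‖ + ‖ζ • v‖ := norm_add_le _ _
      _ < 2 * r := by linarith
  have hsub2 : ball z₀ (2 * r) ⊆ V :=
    fun y hy => hsub (by rw [mem_ball] at hy; rw [mem_closedBall]; linarith)
  have hdiff : ∀ w ∈ ball z₀ (2 * r), DifferentiableAt ℂ g w :=
    fun w hw => hg.differentiableAt (hV.mem_nhds (hsub2 hw))
  have hcauchy : ∀ z ∈ ball z₀ r,
      cderiv ρ (fun ζ : ℂ => g (z + ζ • v)) 0 = fderiv ℂ g z v := by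
    intro z hz
    have hc : Continuous fun ζ : ℂ => z + ζ • v := by fun_prop
    rw [Complex.cderiv_eq_deriv (U := (fun ζ : ℂ => z + ζ • v) ⁻¹' V) (hV.preimage hc) ?_ hρ ?_]
    · have h0 : HasDerivAt (fun ζ : ℂ => z + ζ • v) v 0 := by
        simpa using ((hasDerivAt_id (0 : ℂ)).smul_const v).const_add z
      have hgz : HasFDerivAt g (fderiv ℂ g z) (z + (0 : ℂ) • v) := by
        have := (hdiff z (by simpa using hmem z hz 0 (by simpa using hρ.le))).hasFDerivAt
        simpa using this
      exact (hgz.comp_hasDerivAt (0 : ℂ) h0).deriv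
    · exact hg.comp (by fun_prop) (fun _ h => h)
    · intro ζ hζ
      exact hsub2 (hmem z hz ζ (by simpa using hζ))
  have hz₀r : ball z₀ r ∈ 𝓝 z₀ := ball_mem_nhds _ hr
  have hcirc : ∀ θ : ℝ, ‖circleMap 0 ρ θ‖ ≤ ρ := fun θ => by simp [abs_of_pos hρ]
  -- The kernel of Cauchy's formula for the derivative at `0`, in the angular parameter.
  set c : ℝ → ℂ := fun θ => deriv (circleMap 0 ρ) θ * ((circleMap 0 ρ θ - 0) ^ 2)⁻¹ with hcdef
  have hccont : Continuous c := by
    have : ∀ θ : ℝ, (circleMap 0 ρ θ - 0) ^ 2 ≠ 0 := fun θ => by simp [hρ.ne']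
    simp only [hcdef, deriv_circleMap]
    fun_prop (disch := assumption)
  have hcurve : ∀ z, Continuous fun θ : ℝ => z + circleMap 0 ρ θ • v := fun z => by fun_prop
  have hFcont : ∀ z ∈ ball z₀ r, Continuous fun θ : ℝ => c θ • g (z + circleMap 0 ρ θ • v) := by
    intro z hz
    refine hccont.smul ?_
    exact hg.continuousOn.comp_continuous (hcurve z)
      (fun θ => hsub2 (hmem z hz _ (hcirc θ)))
  have key := intervalIntegral.hasFDerivAt_integral_of_dominated_of_fderiv_le (𝕜 := ℂ)
    (μ := volume) (a := 0) (b := 2 * Real.pi)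
    (F := fun z θ => c θ • g (z + circleMap 0 ρ θ • v))
    (F' := fun z θ => c θ • fderiv ℂ g (z + circleMap 0 ρ θ • v))
    (bound := fun θ => ‖c θ‖ * (2 * C / r)) hz₀r
    (by
      filter_upwards [hz₀r] with z hz
      exact (hFcont z hz).aestronglyMeasurable)
    ((hFcont z₀ (mem_ball_self hr)).intervalIntegrable _ _)
    (by
      -- `fderiv ℂ g` is not yet known to be continuous, but it is always measurable.
      refine hccont.aestronglyMeasurable.smul ?_
      exact ((measurable_fderiv ℂ g).comp (hcurve z₀).measurable).aestronglyMeasurable)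
    (by
      refine Eventually.of_forall fun θ _ z hz => ?_
      rw [norm_smul]
      gcongr
      exact hbound _ (hmem z hz _ (hcirc θ)))
    (Continuous.intervalIntegrable (by fun_prop) _ _)
    (by
      refine Eventually.of_forall fun θ _ z hz => ?_
      refine HasFDerivAt.const_smul ?_ (c θ)
      have := (hdiff _ (hmem z hz _ (hcirc θ))).hasFDerivAt.comp z
        ((hasFDerivAt_id z).add_const (circleMap 0 ρ θ • v))
      simpa [Function.comp_def] using this)
  refine (key.const_smul ((2 * Real.pi * I : ℂ)⁻¹)).differentiableAt.congr_of_eventuallyEq ?_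
  filter_upwards [hz₀r] with z hz
  rw [← hcauchy z hz, cderiv, circleIntegral]
  simp only [hcdef, mul_smul, Pi.smul_apply]

/-- The derivative of a holomorphic map between finite-dimensional spaces is holomorphic. -/
lemma differentiableOn_fderiv_of_differentiableOn {F G : Type*} [NormedAddCommGroup F]
    [NormedSpace ℂ F] [FiniteDimensional ℂ F] [NormedAddCommGroup G] [NormedSpace ℂ G]
    [FiniteDimensional ℂ G] {V : Set F} (hV : IsOpen V) {g : F → G}
    (hg : DifferentiableOn ℂ g V) : DifferentiableOn ℂ (fderiv ℂ g) V := by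
  let d := Module.finrank ℂ F
  have hd : d = Module.finrank ℂ (Fin d → ℂ) := (Module.finrank_fin_fun ℂ).symm
  let e₁ := ContinuousLinearEquiv.ofFinrankEq hd
  let e₂ := (e₁.arrowCongr (1 : G ≃L[ℂ] G)).trans (ContinuousLinearEquiv.piRing (Fin d))
  rw [← Function.id_comp (fderiv ℂ g), ← e₂.symm_comp_self]
  exact e₂.symm.differentiable.comp_differentiableOn (differentiableOn_pi.mpr fun i z hz =>
    (differentiableAt_fderiv_apply hV hg hz _).differentiableWithinAt)

lemma contDiffOn_two_of_differentiableOn {F G : Type*} [NormedAddCommGroup F]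
    [NormedSpace ℂ F] [FiniteDimensional ℂ F] [NormedAddCommGroup G] [NormedSpace ℂ G]
    [FiniteDimensional ℂ G] {V : Set F} (hV : IsOpen V) {g : F → G}
    (hg : DifferentiableOn ℂ g V) : ContDiffOn ℂ 2 g V := by
  have h1 := differentiableOn_fderiv_of_differentiableOn hV hg
  have h2 := differentiableOn_fderiv_of_differentiableOn hV h1
  rw [show (2 : WithTop ℕ∞) = 1 + 1 from one_add_one_eq_two.symm,
    contDiffOn_succ_iff_fderiv_of_isOpen hV]
  refine ⟨hg, by simp, ?_⟩
  rw [show (1 : WithTop ℕ∞) = 0 + 1 from (zero_add 1).symm,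
    contDiffOn_succ_iff_fderiv_of_isOpen hV]
  exact ⟨h1, by simp, contDiffOn_zero.2 h2.continuousOn⟩

/-! ### The Laplacian and the conformality condition in complex form -/

open InnerProductSpace in
lemma lap_eq_laplacian {E : Type*} [NormedAddCommGroup E] [InnerProductSpace ℝ E]
    [FiniteDimensional ℝ E] {f : E → ℝ} {x : E} (hf : ContDiffAt ℝ 2 f x) :
    lap f x = Laplacian.laplacian f x := by
  have hd : DifferentiableAt ℝ (fderiv ℝ f) x :=
    (hf.fderiv_right (m := 1) (by norm_num [one_add_one_eq_two])).differentiableAt (by norm_num)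
  have hgrad : gradient f = fun y => ∑ i, fderiv ℝ f y (stdOrthonormalBasis ℝ E i) •
      stdOrthonormalBasis ℝ E i := by
    ext1 y
    rw [← (stdOrthonormalBasis ℝ E).sum_repr' (gradient f y)]
    simp [inner_gradient_right]
  have hG : DifferentiableAt ℝ (gradient f) x := by
    rw [hgrad]
    fun_prop
  rw [lap, LinearMap.trace_eq_sum_inner _ (stdOrthonormalBasis ℝ E),
    laplacian_eq_iteratedFDeriv_stdOrthonormalBasis]
  refine Finset.sum_congr rfl fun i _ => ?_
  set e := stdOrthonormalBasis ℝ E i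
  have h1 := ((innerSL ℝ e).hasFDerivAt.comp x hG.hasFDerivAt)
  have h2 := hd.hasFDerivAt.clm_apply (hasFDerivAt_const e x)
  have h3 : (innerSL ℝ e) ∘ gradient f = fun y => fderiv ℝ f y e := by
    ext1 y
    simp [inner_gradient_right]
  rw [h3] at h1
  have := DFunLike.congr_fun (h1.unique h2) e
  rw [iteratedFDeriv_two_apply]
  simpa using this

/-- Chain rule for the Laplacian of `g ∘ φ`, with `g` holomorphic near `φ x`: the Hessian term is
the trace of the complex bilinear form `g''` pulled back along the differential of `φ`. -/
lemma laplacian_comp_holomorphic {E : Type*} [NormedAddCommGroup E] [InnerProductSpace ℝ E]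
    [FiniteDimensional ℝ E] {F : Type*} [NormedAddCommGroup F] [NormedSpace ℂ F]
    {φ : E → F} {x : E} (hφ : ContDiffAt ℝ 2 φ x) {g : F → ℂ} {g' : F → F →L[ℂ] ℂ}
    {g'' : F →L[ℂ] F →L[ℂ] ℂ} (hg : ∀ᶠ z in nhds (φ x), HasFDerivAt g (g' z) z)
    (hg' : HasFDerivAt g' g'' (φ x)) :
    Laplacian.laplacian (fun y => g (φ y)) x =
      ∑ i, g'' (fderiv ℝ φ x (stdOrthonormalBasis ℝ E i))
          (fderiv ℝ φ x (stdOrthonormalBasis ℝ E i)) +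
        g' (φ x) (Laplacian.laplacian φ x) := by
  have hd : DifferentiableAt ℝ (fderiv ℝ φ) x :=
    (hφ.fderiv_right (m := 1) (by norm_num [one_add_one_eq_two])).differentiableAt (by norm_num)
  have hφx : DifferentiableAt ℝ φ x := hφ.differentiableAt (by norm_num)
  have hev : fderiv ℝ (fun y => g (φ y)) =ᶠ[nhds x]
      fun y => ((g' (φ y)).restrictScalars ℝ).comp (fderiv ℝ φ y) := by
    filter_upwards [hφ.continuousAt.eventually hg, hφ.eventually (by norm_num)] with y hy hφy
    exact ((hy.restrictScalars ℝ).comp y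
      (hφy.differentiableAt (by norm_num)).hasFDerivAt).fderiv
  have hc : HasFDerivAt (fun y => (g' (φ y)).restrictScalars ℝ)
      ((ContinuousLinearMap.restrictScalarsL ℂ F ℂ ℝ ℝ).comp
        ((g''.restrictScalars ℝ).comp (fderiv ℝ φ x))) x :=
    (ContinuousLinearMap.restrictScalarsL ℂ F ℂ ℝ ℝ).hasFDerivAt.comp x
      ((hg'.restrictScalars ℝ).comp x hφx.hasFDerivAt)
  have hcomp := hc.clm_comp hd.hasFDerivAt
  rw [InnerProductSpace.laplacian_eq_iteratedFDeriv_stdOrthonormalBasis,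
    InnerProductSpace.laplacian_eq_iteratedFDeriv_stdOrthonormalBasis, map_sum,
    ← Finset.sum_add_distrib]
  refine Finset.sum_congr rfl fun i _ => ?_
  rw [iteratedFDeriv_two_apply, iteratedFDeriv_two_apply, hev.fderiv_eq, hcomp.fderiv]
  simp [add_comm]

/-- The trace, over an orthonormal basis, of the complex bilinear product of the
differentials of `F` and `G`; its real and imaginary parts are the two expressions in the conformality condition. -/
noncomputable def gradProd {E : Type*} [NormedAddCommGroup E] [InnerProductSpace ℝ E]
    [FiniteDimensional ℝ E] (F G : E → ℂ) (x : E) : ℂ :=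
  ∑ i, fderiv ℝ F x (stdOrthonormalBasis ℝ E i) * fderiv ℝ G x (stdOrthonormalBasis ℝ E i)

lemma inner_gradient_eq_sum {E : Type*} [NormedAddCommGroup E] [InnerProductSpace ℝ E]
    [FiniteDimensional ℝ E] (f g : E → ℝ) (x : E) :
    ⟪gradient f x, gradient g x⟫ = ∑ i, fderiv ℝ f x (stdOrthonormalBasis ℝ E i) *
      fderiv ℝ g x (stdOrthonormalBasis ℝ E i) := by
  rw [← (stdOrthonormalBasis ℝ E).sum_inner_mul_inner]
  simp [inner_gradient_left, inner_gradient_right]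

lemma gradProd_eq_zero_iff {E : Type*} [NormedAddCommGroup E] [InnerProductSpace ℝ E]
    [FiniteDimensional ℝ E] {F G : E → ℂ} {x : E} (hF : DifferentiableAt ℝ F x)
    (hG : DifferentiableAt ℝ G x) :
    gradProd F G x = 0 ↔
    ⟪gradient (fun y => (F y).re) x, gradient (fun y => (G y).re) x⟫ -
      ⟪gradient (fun y => (F y).im) x, gradient (fun y => (G y).im) x⟫ = 0 ∧
    ⟪gradient (fun y => (F y).im) x, gradient (fun y => (G y).re) x⟫ +
      ⟪gradient (fun y => (F y).re) x, gradient (fun y => (G y).im) x⟫ = 0 := by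
  have hre : ∀ {H : E → ℂ}, DifferentiableAt ℝ H x → ∀ e,
      fderiv ℝ (fun y => (H y).re) x e = (fderiv ℝ H x e).re := fun hH e =>
    DFunLike.congr_fun (Complex.reCLM.hasFDerivAt.comp x hH.hasFDerivAt).fderiv e
  have him : ∀ {H : E → ℂ}, DifferentiableAt ℝ H x → ∀ e,
      fderiv ℝ (fun y => (H y).im) x e = (fderiv ℝ H x e).im := fun hH e =>
    DFunLike.congr_fun (Complex.imCLM.hasFDerivAt.comp x hH.hasFDerivAt).fderiv e
  rw [Complex.ext_iff]
  simp only [inner_gradient_eq_sum, hre hF, hre hG, him hF, him hG, gradProd, Complex.re_sum,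
    Complex.im_sum, Complex.mul_re, Complex.mul_im, Complex.zero_re, Complex.zero_im,
    ← Finset.sum_sub_distrib, ← Finset.sum_add_distrib]
  refine and_congr Iff.rfl ?_
  simp only [add_comm]

/-- Complex form of the definition of a pseudo harmonic morphism. -/
lemma phmOn_iff {E : Type*} [NormedAddCommGroup E] [InnerProductSpace ℝ E]
    [FiniteDimensional ℝ E] {n : ℕ} {φ : E → Fin n → ℂ} {W : Set E} (hW : IsOpen W)
    (hφ : ContDiffOn ℝ 2 φ W) :
    PHMOn φ W ↔ ∀ x ∈ W, (∀ A, Laplacian.laplacian (fun y => φ y A) x = 0) ∧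
      ∀ A B, gradProd (fun y => φ y A) (fun y => φ y B) x = 0 := by
  have hc : ∀ A, ContDiffOn ℝ 2 (fun y => φ y A) W := contDiffOn_pi.1 hφ
  have hca : ∀ A, ∀ x ∈ W, ContDiffAt ℝ 2 (fun y => φ y A) x :=
    fun A x hx => (hc A).contDiffAt (hW.mem_nhds hx)
  have hda : ∀ A, ∀ x ∈ W, DifferentiableAt ℝ (fun y => φ y A) x :=
    fun A x hx => (hca A x hx).differentiableAt (by norm_num)
  have hre : ∀ A, ∀ x ∈ W, lap (fun y => (φ y A).re) x =
      (Laplacian.laplacian (fun y => φ y A) x).re := fun A x hx => by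
    have h1 : ContDiffAt ℝ 2 (fun y => (φ y A).re) x :=
      Complex.reCLM.contDiff.contDiffAt.comp x (hca A x hx)
    rw [lap_eq_laplacian h1]
    exact (hca A x hx).laplacian_CLM_comp_left (l := Complex.reCLM)
  have him : ∀ A, ∀ x ∈ W, lap (fun y => (φ y A).im) x =
      (Laplacian.laplacian (fun y => φ y A) x).im := fun A x hx => by
    have h1 : ContDiffAt ℝ 2 (fun y => (φ y A).im) x :=
      Complex.imCLM.contDiff.contDiffAt.comp x (hca A x hx)
    rw [lap_eq_laplacian h1]
    exact (hca A x hx).laplacian_CLM_comp_left (l := Complex.imCLM)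
  constructor
  · rintro ⟨-, hh, hp⟩ x hx
    refine ⟨fun A => Complex.ext ?_ ?_, fun A B => ?_⟩
    · rw [← hre A x hx]; exact (hh A).1.2 x hx
    · rw [← him A x hx]; exact (hh A).2.2 x hx
    · exact (gradProd_eq_zero_iff (hda A x hx) (hda B x hx)).2 (hp A B x hx)
  · intro h
    refine ⟨hφ, fun A => ⟨⟨Complex.reCLM.contDiff.comp_contDiffOn (hc A), fun x hx => ?_⟩,
      ⟨Complex.imCLM.contDiff.comp_contDiffOn (hc A), fun x hx => ?_⟩⟩, fun A B x hx => ?_⟩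
    · rw [hre A x hx, (h x hx).1 A, Complex.zero_re]
    · rw [him A x hx, (h x hx).1 A, Complex.zero_im]
    · exact (gradProd_eq_zero_iff (hda A x hx) (hda B x hx)).1 ((h x hx).2 A B)

/-! ### Composition with holomorphic maps -/

/-- If `∑ i, w i ⊗ w i = 0`, tested on coordinates, then every complex bilinear form has
vanishing trace along `w`. -/
lemma sum_bilin_eq_zero {ι : Type*} [Fintype ι] {n : ℕ} {w : ι → Fin n → ℂ}
    (hw : ∀ A B, ∑ i, w i A * w i B = 0) (L : (Fin n → ℂ) →ₗ[ℂ] (Fin n → ℂ) →ₗ[ℂ] ℂ) :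
    ∑ i, L (w i) (w i) = 0 := by
  have h : ∀ v, L v v = ∑ A, ∑ B, v A * v B * L (Pi.single A 1) (Pi.single B 1) := fun v => by
    conv_lhs => rw [LinearMap.pi_apply_eq_sum_univ L v]
    rw [LinearMap.sum_apply]
    refine Finset.sum_congr rfl fun A _ => ?_
    rw [LinearMap.smul_apply, LinearMap.pi_apply_eq_sum_univ _ v, Finset.smul_sum]
    refine Finset.sum_congr rfl fun B _ => ?_
    have hs : ∀ A : Fin n, (fun j => if A = j then (1 : ℂ) else 0) = Pi.single A 1 := fun A => by
      ext j; simp [Pi.single_apply, eq_comm]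
    rw [hs, hs, smul_eq_mul, smul_eq_mul, mul_assoc]
  simp_rw [h]
  rw [Finset.sum_comm]
  refine Finset.sum_eq_zero fun A _ => ?_
  rw [Finset.sum_comm]
  refine Finset.sum_eq_zero fun B _ => ?_
  rw [← Finset.sum_mul, hw, zero_mul]

lemma fderiv_apply_component {E : Type*} [NormedAddCommGroup E] [NormedSpace ℝ E] {n : ℕ}
    {φ : E → Fin n → ℂ} {x : E} (h : DifferentiableAt ℝ φ x) (A : Fin n) (e : E) :
    fderiv ℝ (fun y => φ y A) x e = fderiv ℝ φ x e A := by
  rw [(hasFDerivAt_pi'.1 h.hasFDerivAt A).fderiv]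
  rfl

lemma laplacian_component {E : Type*} [NormedAddCommGroup E] [InnerProductSpace ℝ E]
    [FiniteDimensional ℝ E] {n : ℕ} {φ : E → Fin n → ℂ} {x : E} (h : ContDiffAt ℝ 2 φ x)
    (A : Fin n) : Laplacian.laplacian (fun y => φ y A) x =
      Laplacian.laplacian φ x A :=
  h.laplacian_CLM_comp_left (l := ContinuousLinearMap.proj (R := ℝ) (φ := fun _ : Fin n => ℂ) A)

/-- A `C²` map `φ : U → ℂⁿ` is a pseudo harmonic morphism if and only if, for every open
set `V ⊆ ℂⁿ` and every holomorphic map `ψ : V → ℂᵖ`, the composition `ψ ∘ φ` is a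
pseudo harmonic morphism on `φ⁻¹(V)`. -/
theorem phm_iff_comp_holom_map_phm {E : Type*} [NormedAddCommGroup E]
    [InnerProductSpace ℝ E] [FiniteDimensional ℝ E] {n : ℕ}
    (U : Set E) (hU : IsOpen U) (hUne : U.Nonempty)
    (p : ℕ) (hp : 1 ≤ p)
    (φ : E → (Fin n → ℂ)) (hφ : ContDiffOn ℝ 2 φ U) :
    PHMOn φ U ↔
    ∀ V : Set (Fin n → ℂ), IsOpen V → ∀ ψ : (Fin n → ℂ) → (Fin p → ℂ),
      DifferentiableOn ℂ ψ V → PHMOn (fun y => ψ (φ y)) (U ∩ φ ⁻¹' V) := by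
  have hφa : ∀ x ∈ U, ContDiffAt ℝ 2 φ x := fun x hx => hφ.contDiffAt (hU.mem_nhds hx)
  have hφd : ∀ x ∈ U, DifferentiableAt ℝ φ x :=
    fun x hx => (hφa x hx).differentiableAt (by norm_num)
  constructor
  · intro h V hV ψ hψ
    rw [phmOn_iff hU hφ] at h
    have hψ2 : ContDiffOn ℝ 2 ψ V := (contDiffOn_two_of_differentiableOn hV hψ).restrict_scalars ℝ
    rw [phmOn_iff (hφ.continuousOn.isOpen_inter_preimage hU hV)
      (φ := fun y => ψ (φ y)) (hψ2.comp (hφ.mono Set.inter_subset_left) fun _ hx => hx.2)]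
    rintro x ⟨hx, hxV⟩
    obtain ⟨hlap, hgp⟩ := h x hx
    have hw : ∀ A B, ∑ i, fderiv ℝ φ x (stdOrthonormalBasis ℝ E i) A *
        fderiv ℝ φ x (stdOrthonormalBasis ℝ E i) B = 0 := fun A B => by
      rw [← hgp A B, gradProd]
      simp only [fderiv_apply_component (hφd x hx)]
    have hlap0 : Laplacian.laplacian φ x = 0 := by
      ext A
      rw [← laplacian_component (hφa x hx), hlap A]; rfl
    have hψk : ∀ k, DifferentiableOn ℂ (fun z => ψ z k) V := differentiableOn_pi.1 hψ
    have hψa : ∀ k, ∀ z ∈ V, HasFDerivAt (fun z => ψ z k) (fderiv ℂ (fun z => ψ z k) z) z :=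
      fun k z hz => ((hψk k).differentiableAt (hV.mem_nhds hz)).hasFDerivAt
    refine ⟨fun k => ?_, fun k l => ?_⟩
    · have hg' := ((differentiableOn_fderiv_of_differentiableOn hV (hψk k)).differentiableAt
        (hV.mem_nhds hxV)).hasFDerivAt
      have hg : ∀ᶠ z in nhds (φ x),
          HasFDerivAt (fun z => ψ z k) (fderiv ℂ (fun z => ψ z k) z) z := by
        filter_upwards [hV.mem_nhds hxV] with z hz using hψa k z hz
      rw [laplacian_comp_holomorphic (hφa x hx) hg hg', hlap0, map_zero, add_zero]
      exact sum_bilin_eq_zero hw (LinearMap.mk₂ ℂ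
        (fun v w => fderiv ℂ (fderiv ℂ fun z => ψ z k) (φ x) v w)
        (by simp) (by simp) (by simp) (by simp))
    · have hfd : ∀ k e, fderiv ℝ (fun y => ψ (φ y) k) x e =
          fderiv ℂ (fun z => ψ z k) (φ x) (fderiv ℝ φ x e) := fun k e => by
        have := ((hψa k _ hxV).restrictScalars ℝ).comp x (hφd x hx).hasFDerivAt
        rw [show (fun y => ψ (φ y) k) = (fun z => ψ z k) ∘ φ from rfl, this.fderiv]
        rfl
      simp only [gradProd, hfd]
      exact sum_bilin_eq_zero hw (LinearMap.mk₂ ℂ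
        (fun v w => fderiv ℂ (fun z => ψ z k) (φ x) v * fderiv ℂ (fun z => ψ z l) (φ x) w)
        (by simp [add_mul]) (by simp [mul_assoc]) (by simp [mul_add]) (by simp [mul_left_comm]))
  · intro h
    have hop : IsOpen (U ∩ φ ⁻¹' Set.univ) := by simpa using hU
    have key : ∀ g : (Fin n → ℂ) → ℂ, Differentiable ℂ g → ∀ x ∈ U,
        Laplacian.laplacian (fun y => g (φ y)) x = 0 := fun g hg x hx => by
      have := h Set.univ isOpen_univ (fun z _ => g z)
        (differentiable_pi.2 fun _ => hg).differentiableOn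
      exact ((phmOn_iff hop this.1).1 this x ⟨hx, Set.mem_univ _⟩).1 ⟨0, hp⟩
    rw [phmOn_iff hU hφ]
    intro x hx
    have hlap : ∀ A, Laplacian.laplacian (fun y => φ y A) x = 0 :=
      fun A => key (fun z => z A) (by fun_prop) x hx
    refine ⟨hlap, fun A B => ?_⟩
    have hlap0 : Laplacian.laplacian φ x = 0 := by
      ext A
      rw [← laplacian_component (hφa x hx), hlap A]; rfl
    -- The Laplacian of `φ^A φ^B` is `2 ∑ ∂ᵢφ^A ∂ᵢφ^B`, because `φ` is harmonic.
    let P : Fin n → (Fin n → ℂ) →L[ℂ] ℂ := fun A => ContinuousLinearMap.proj A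
    have hP : ∀ A z, HasFDerivAt (fun z : Fin n → ℂ => z A) (P A) z :=
      fun A z => (P A).hasFDerivAt
    have hprod := laplacian_comp_holomorphic (hφa x hx) (g := fun z => z A * z B)
      (Filter.Eventually.of_forall fun z => (hP A z).mul (hP B z))
      (((hP A (φ x)).smul_const (P B)).add ((hP B (φ x)).smul_const (P A)))
    rw [key (fun z => z A * z B) (by fun_prop) x hx, hlap0, map_zero, add_zero] at hprod
    have h2 : 2 * gradProd (fun y => φ y A) (fun y => φ y B) x = 0 := by
      rw [hprod, gradProd, Finset.mul_sum]
      refine Finset.sum_congr rfl fun i _ => ?_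
      simp only [fderiv_apply_component (hφd x hx)]
      simp [P]
      ring
    simpa using h2
end

section
/- Let E be a finite-dimensional real inner product space, U ⊆ E a nonempty open set, and φ : U → ℂⁿ a C² map with components φ^k (k = 1,…,n). Suppose that for every k ∈ {1,…,n} the real and imaginary parts of φ^k are harmonic on U, and that for every A, B ∈ {1,…,n} the real and imaginary parts of the product φ^A·φ^B are harmonic on U. Then φ is a pseudo harmonic morphism, i.e. φ is harmonic and pseudo-horizontally weakly conformal. -/
open scoped RealInnerProductSpace

lemma eventually_differentiableAt {E : Type*} [NormedAddCommGroup E] [InnerProductSpace ℝ E]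
    {f : E → ℝ} {x : E} (hf : ContDiffAt ℝ 2 f x) :
    ∀ᶠ y in nhds x, DifferentiableAt ℝ f y :=
  (hf.eventually (by simp)).mono fun _ hy => hy.differentiableAt (by norm_num)

section Laplacian

variable {E : Type*} [NormedAddCommGroup E] [InnerProductSpace ℝ E] [CompleteSpace E]
  {f g : E → ℝ} {x : E}

lemma differentiableAt_gradient (hf : ContDiffAt ℝ 2 f x) :
    DifferentiableAt ℝ (gradient f) x := by
  have h : DifferentiableAt ℝ (fderiv ℝ f) x :=
    (hf.fderiv_right (m := 1) (by norm_num)).differentiableAt (by norm_num)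
  exact ((InnerProductSpace.toDual ℝ E).symm.toContinuousLinearEquiv.differentiableAt).comp x h

lemma gradient_add_eventuallyEq (hf : ContDiffAt ℝ 2 f x) (hg : ContDiffAt ℝ 2 g x) :
    gradient (fun y => f y + g y) =ᶠ[nhds x] fun y => gradient f y + gradient g y := by
  filter_upwards [eventually_differentiableAt hf, eventually_differentiableAt hg] with y hfy hgy
  simp only [gradient]
  rw [fderiv_fun_add hfy hgy, map_add]

lemma gradient_sub_eventuallyEq (hf : ContDiffAt ℝ 2 f x) (hg : ContDiffAt ℝ 2 g x) :
    gradient (fun y => f y - g y) =ᶠ[nhds x] fun y => gradient f y - gradient g y := by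
  filter_upwards [eventually_differentiableAt hf, eventually_differentiableAt hg] with y hfy hgy
  simp only [gradient]
  rw [fderiv_fun_sub hfy hgy, map_sub]

lemma gradient_mul_eventuallyEq (hf : ContDiffAt ℝ 2 f x) (hg : ContDiffAt ℝ 2 g x) :
    gradient (fun y => f y * g y) =ᶠ[nhds x]
      fun y => f y • gradient g y + g y • gradient f y := by
  filter_upwards [eventually_differentiableAt hf, eventually_differentiableAt hg] with y hfy hgy
  simp only [gradient]
  rw [fderiv_fun_mul hfy hgy, map_add, map_smulₛₗ, map_smulₛₗ]
  rfl

lemma lap_add (hf : ContDiffAt ℝ 2 f x) (hg : ContDiffAt ℝ 2 g x) :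
    lap (fun y => f y + g y) x = lap f x + lap g x := by
  simp only [lap]
  rw [(gradient_add_eventuallyEq hf hg).fderiv_eq,
    fderiv_fun_add (differentiableAt_gradient hf) (differentiableAt_gradient hg),
    ContinuousLinearMap.toLinearMap_add, map_add]

lemma lap_sub (hf : ContDiffAt ℝ 2 f x) (hg : ContDiffAt ℝ 2 g x) :
    lap (fun y => f y - g y) x = lap f x - lap g x := by
  simp only [lap]
  rw [(gradient_sub_eventuallyEq hf hg).fderiv_eq,
    fderiv_fun_sub (differentiableAt_gradient hf) (differentiableAt_gradient hg),
    ContinuousLinearMap.toLinearMap_sub, map_sub]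

/-- The product rule for the Laplacian. The derivative of `f • ∇g + g • ∇f` contributes, besides
the multiples of the two Hessians, the rank-one maps `v ↦ df(v) • ∇g` and `v ↦ dg(v) • ∇f`, each of
trace `⟪∇f, ∇g⟫`; finite dimension is needed for the trace of a rank-one map to be its
contraction. -/
lemma lap_mul [FiniteDimensional ℝ E] (hf : ContDiffAt ℝ 2 f x) (hg : ContDiffAt ℝ 2 g x) :
    lap (fun y => f y * g y) x =
      f x * lap g x + g x * lap f x + 2 * ⟪gradient f x, gradient g x⟫ := by
  have hf1 : DifferentiableAt ℝ f x := hf.differentiableAt (by norm_num)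
  have hg1 : DifferentiableAt ℝ g x := hg.differentiableAt (by norm_num)
  have hf2 := differentiableAt_gradient hf
  have hg2 := differentiableAt_gradient hg
  simp only [lap]
  rw [(gradient_mul_eventuallyEq hf hg).fderiv_eq,
    fderiv_fun_add (hf1.fun_smul hg2) (hg1.fun_smul hf2), fderiv_fun_smul hf1 hg2,
    fderiv_fun_smul hg1 hf2]
  have htr : ∀ (l : E →L[ℝ] ℝ) (w : E),
      LinearMap.trace ℝ E (l.smulRight w : E →ₗ[ℝ] E) = l w := fun l w =>
    LinearMap.trace_smulRight (l : E →ₗ[ℝ] ℝ) w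
  simp only [ContinuousLinearMap.toLinearMap_add, ContinuousLinearMap.toLinearMap_smul, map_add,
    map_smul, htr, ← inner_gradient_left, smul_eq_mul]
  rw [real_inner_comm (gradient f x) (gradient g x)]
  ring

end Laplacian

/-- If the real and imaginary parts of all components `φᵏ` of a `C²` map `φ : U → ℂⁿ`
are harmonic, and the real and imaginary parts of all products `φᴬ·φᴮ` are harmonic, then
`φ` is a pseudo harmonic morphism: harmonic and pseudo-horizontally weakly conformal. -/
theorem phm_of_harmonic_components_and_products {E : Type*} [NormedAddCommGroup E]
    [InnerProductSpace ℝ E] [FiniteDimensional ℝ E] {n : ℕ}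
    (U : Set E) (hU : IsOpen U) (hUne : U.Nonempty)
    (φ : E → (Fin n → ℂ)) (hφ : ContDiffOn ℝ 2 φ U)
    (hcomp : ∀ k : Fin n,
      HarmonicOn (fun y => (φ y k).re) U ∧ HarmonicOn (fun y => (φ y k).im) U)
    (hprod : ∀ A B : Fin n,
      HarmonicOn (fun y => (φ y A * φ y B).re) U ∧
      HarmonicOn (fun y => (φ y A * φ y B).im) U) :
    PHMOn φ U := by
  refine ⟨hφ, hcomp, fun A B x hx => ?_⟩
  have hC2 : ∀ {f : E → ℝ}, HarmonicOn f U → ContDiffAt ℝ 2 f x := fun hf =>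
    hf.1.contDiffAt (hU.mem_nhds hx)
  obtain ⟨hu, hv⟩ := hcomp A
  obtain ⟨hs, ht⟩ := hcomp B
  have hre := (hprod A B).1.2 x hx
  have him := (hprod A B).2.2 x hx
  simp only [Complex.mul_re] at hre
  simp only [Complex.mul_im] at him
  rw [lap_sub ((hC2 hu).mul (hC2 hs)) ((hC2 hv).mul (hC2 ht)), lap_mul (hC2 hu) (hC2 hs),
    lap_mul (hC2 hv) (hC2 ht), hu.2 x hx, hv.2 x hx, hs.2 x hx, ht.2 x hx] at hre
  rw [lap_add ((hC2 hu).mul (hC2 ht)) ((hC2 hv).mul (hC2 hs)), lap_mul (hC2 hu) (hC2 ht),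
    lap_mul (hC2 hv) (hC2 hs), hu.2 x hx, hv.2 x hx, hs.2 x hx, ht.2 x hx] at him
  constructor <;> linarith
end
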